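/- Let p and q be primes satisfying conditions (1). Then the class number of the real biquadratic field Q(√p, √q) is odd. -/

import Mathlib

noncomputable section

open IntermediateField NumberField

/-- Conditions (1). -/
def Cond1 (p q : ℕ) : Prop :=
  p.Prime ∧ q.Prime ∧ p % 4 = 1 ∧ q % 4 = 3 ∧
    jacobiSym 2 p = -1 ∧ jacobiSym 2 q = 1 ∧ jacobiSym (p : ℤ) q = -1

/-- The real biquadratic field `ℚ(√p, √q)` as a subfield of `ℝ`. -/
def Kf (p q : ℕ) : IntermediateField ℚ ℝ :=
  adjoin ℚ {Real.sqrt p, Real.sqrt q}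

theorem isPrincipal_of_mul_span {R : Type*} [CommRing R] [IsDedekindDomain R] {I : Ideal R} {c : R}
    (hc : c ≠ 0) (h : (I * Ideal.span {c}).IsPrincipal) : I.IsPrincipal := by
  obtain ⟨b, hb⟩ := h
  rw [Ideal.submodule_span_eq] at hb
  have hbc : b ∈ Ideal.span {c} :=
    Ideal.dvd_iff_le.1 (dvd_mul_left _ I) (hb ▸ Ideal.mem_span_singleton_self b)
  obtain ⟨d, rfl⟩ := Ideal.mem_span_singleton.1 hbc
  refine ⟨d, ?_⟩
  have hc' : Ideal.span {c} ≠ 0 := by simpa using hc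
  refine mul_right_cancel₀ hc' ?_
  rw [hb, Ideal.submodule_span_eq, Ideal.span_singleton_mul_span_singleton, mul_comm]

theorem isPrincipal_of_odd_pow {R : Type*} [CommRing R] [IsDedekindDomain R] {I : Ideal R} {m : ℕ}
    (hm : Odd m) (h2 : (I ^ 2).IsPrincipal) (h : (I ^ m).IsPrincipal) : I.IsPrincipal := by
  by_cases hI : I = 0
  · rw [hI]
    exact bot_isPrincipal
  obtain ⟨k, rfl⟩ := hm
  obtain ⟨a, ha⟩ := h2
  rw [Ideal.submodule_span_eq] at ha
  have ha0 : a ≠ 0 := by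
    rintro rfl
    rw [Ideal.span_singleton_zero] at ha
    exact pow_ne_zero 2 hI ha
  refine isPrincipal_of_mul_span (pow_ne_zero k ha0) ?_
  rwa [← Ideal.span_singleton_pow, ← ha, ← pow_mul, ← pow_succ']

section quadratic

variable {R S : Type*} [CommRing R] [CommRing S] [IsDedekindDomain R] [IsDedekindDomain S]
  [Algebra R S] [Module.Finite R S] [Module.IsTorsionFree R S]

/-- `σ` is the nontrivial involution of a quadratic extension `S` of the Dedekind domain `R`. -/
structure IsQuadInvolution (σ : S ≃ₐ[R] S) : Prop where
  finrank_eq : Module.finrank R S = 2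
  apply_apply : ∀ x, σ (σ x) = x
  exists_eq_of_fixed : ∀ x, σ x = x → ∃ r, algebraMap R S r = x
  intNorm_eq : ∀ x, algebraMap R S (Algebra.intNorm R S x) = x * σ x
  exists_ne : ∃ x, σ x ≠ x

variable {σ : S ≃ₐ[R] S}

namespace IsQuadInvolution

theorem map_map (h : IsQuadInvolution σ) (I : Ideal S) : (I.map σ).map σ = I := by
  refine le_antisymm ?_ ?_
  · rw [Ideal.map_le_iff_le_comap, Ideal.map_le_iff_le_comap]
    intro x hx
    simpa [h.apply_apply] using hx
  · intro x hx
    rw [← h.apply_apply x]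
    exact Ideal.mem_map_of_mem _ (Ideal.mem_map_of_mem _ hx)

theorem mul_map (h : IsQuadInvolution σ) (I : Ideal S) :
    I * I.map σ = (Ideal.relNorm R I).map (algebraMap R S) := by
  by_cases hI : I = ⊥
  · subst hI
    simp
  have hle : (Ideal.relNorm R I).map (algebraMap R S) ≤ I * I.map σ := by
    rw [Ideal.map_relNorm, Ideal.span_le]
    rintro _ ⟨x, hx, rfl⟩
    simp only [Function.comp_apply, h.intNorm_eq]
    exact Ideal.mul_mem_mul hx (Ideal.mem_map_of_mem _ hx)
  obtain ⟨J, hJ⟩ := Ideal.dvd_iff_le.2 hle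
  have hN := congrArg (Ideal.relNorm R) hJ
  rw [Ideal.relNorm_algebraMap, h.finrank_eq, map_mul, map_mul, Ideal.relNorm_map_algEquiv,
    pow_two] at hN
  have h0 : Ideal.relNorm R I * Ideal.relNorm R I ≠ 0 := by
    simpa using hI
  have hJ1 : Ideal.relNorm R J = 1 := (mul_eq_left₀ h0).1 hN.symm
  have hJ2 : J = 1 := by
    have := Ideal.relNorm_le_comap R J
    rw [hJ1, Ideal.one_eq_top, top_le_iff, Ideal.comap_eq_top_iff] at this
    rw [this, Ideal.one_eq_top]
  rw [hJ, hJ2, mul_one]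

/-- Invariant ideals are generated by extended ideals and ramified primes. -/
theorem invariant_induction [CharZero R] (h : IsQuadInvolution σ) {good : Ideal S → Prop}
    (hmul : ∀ I J, good I → good J → good (I * J))
    (hext : ∀ J : Ideal R, J ≠ ⊥ → good (J.map (algebraMap R S)))
    (hram : ∀ P : Ideal S, P.IsPrime → P ≠ ⊥ →
      P * P = (P.under R).map (algebraMap R S) → (∀ x, σ x - x ∈ P) → good P)
    (I : Ideal S) (hI : I ≠ ⊥) (hσ : I.map σ = I) : good I := by
  induction I using IsWellFounded.induction (· > · : Ideal S → Ideal S → Prop) with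
  | ind I ih =>
  by_cases hT : I = ⊤
  · subst hT
    have := hext ⊤ top_ne_bot
    rwa [Ideal.map_top] at this
  obtain ⟨P, hP, hIP⟩ := Ideal.exists_le_maximal I hT
  have hP0 : P ≠ ⊥ := fun h0 ↦ hI (le_bot_iff.1 (h0 ▸ hIP))
  have key : ∀ Q : Ideal S, Q ≠ ⊤ → Q.map σ = Q → good Q → Q ∣ I → good I := by
    rintro Q hQT hQ hgQ ⟨J, hJ⟩
    have hQ0 : Q ≠ 0 := by
      rintro rfl
      exact hI (by simpa using hJ)
    have hJ0 : J ≠ 0 := by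
      rintro rfl
      exact hI (by simpa using hJ)
    have hJσ : J.map σ = J := by
      refine mul_left_cancel₀ hQ0 ?_
      rw [← hJ]
      nth_rewrite 1 [← hQ]
      rw [← Ideal.map_mul, ← hJ, hσ]
    rw [hJ]
    refine hmul _ _ hgQ (ih J ?_ hJ0 hJσ)
    refine lt_of_le_of_ne (Ideal.dvd_iff_le.1 ⟨Q, by rw [hJ, mul_comm]⟩) ?_
    rintro rfl
    apply hQT
    rw [← Ideal.one_eq_top]
    exact (mul_eq_right₀ hJ0).1 hJ.symm
  have hrel0 : Ideal.relNorm R P ≠ ⊥ := by simpa using hP0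
  by_cases hPσ : P.map σ = P
  · refine key P hP.ne_top hPσ ?_ (Ideal.dvd_iff_le.2 hIP)
    have hm := h.mul_map P
    rw [hPσ] at hm
    have : (P.under R).IsMaximal := inferInstance
    have hrn := Ideal.relNorm_eq_pow_of_isMaximal P (P.under R)
    have hu0 : P.under R ≠ ⊥ := by
      intro h0
      rw [h0, ← Ideal.zero_eq_bot, zero_pow (Ideal.inertiaDeg_pos P R).ne'] at hrn
      exact hrel0 hrn
    have hle : (P.under R).map (algebraMap R S) ≤ P := Ideal.map_comap_le
    have hdvd : (P.under R).map (algebraMap R S) ∣ P ^ 2 := by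
      rw [pow_two, hm, hrn]
      exact Ideal.dvd_iff_le.2 (Ideal.map_mono (Ideal.pow_le_self (Ideal.inertiaDeg_pos P R).ne'))
    have hprime : Prime P := Ideal.prime_of_isPrime hP0 hP.isPrime
    obtain ⟨i, hi, hass⟩ := (dvd_prime_pow hprime 2).1 hdvd
    rw [associated_iff_eq] at hass
    interval_cases i
    · rw [pow_zero, Ideal.one_eq_top] at hass
      exact absurd (top_le_iff.1 (hass ▸ hle)) hP.ne_top
    · rw [pow_one] at hass
      rw [← hass]
      exact hext _ hu0
    · have hf : P.inertiaDeg R = 1 := by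
        rw [hrn, Ideal.map_pow, hass, ← pow_two, ← pow_mul] at hm
        have := pow_injective_of_not_isUnit hprime.not_isUnit hprime.ne_zero hm
        omega
      refine hram P hP.isPrime hP0 (by rw [hass, pow_two]) fun x ↦ ?_
      rw [Ideal.inertiaDeg_eq_of_isMaximal (P.under R)] at hf
      let : Field (R ⧸ P.under R) := Ideal.Quotient.field _
      obtain ⟨y, hy⟩ := (Algebra.finrank_eq_one_iff_bijective_algebraMap.1 hf).2
        (Ideal.Quotient.mk P x)
      obtain ⟨r, rfl⟩ := Ideal.Quotient.mk_surjective y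
      have hxr : x - algebraMap R S r ∈ P := by
        rw [← Ideal.Quotient.eq]
        exact hy.symm
      have hxr' : σ x - algebraMap R S r ∈ P := by
        have := Ideal.mem_map_of_mem σ hxr
        rwa [hPσ, map_sub, AlgEquiv.commutes] at this
      simpa using P.sub_mem hxr' hxr
  · have hmx : (P.map σ).IsMaximal := Ideal.map_isMaximal_of_equiv σ
    refine key (P * P.map σ) ?_ ?_ ?_ ?_
    · exact fun hh ↦ hP.ne_top (top_le_iff.1 (hh ▸ Ideal.dvd_iff_le.1 (dvd_mul_right P (P.map σ))))
    · rw [Ideal.map_mul, h.map_map, mul_comm]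
    · rw [h.mul_map]
      exact hext _ hrel0
    · rw [Ideal.dvd_iff_le, Ideal.mul_eq_inf_of_isCoprime]
      · refine le_inf hIP ?_
        rw [← hσ]
        exact Ideal.map_mono hIP
      · exact Ideal.isCoprime_of_isMaximal fun hh ↦ hPσ hh.symm

/-- Descent of principality: over a base of odd class group exponent, an ideal with principal square
is principal as soon as every norm that is a unit is the norm of a unit and the ramified primes
are principal. -/
theorem isPrincipal_of_sq [CharZero R] (h : IsQuadInvolution σ) {m : ℕ} (hm : Odd m)
    (hR : ∀ J : Ideal R, (J ^ m).IsPrincipal)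
    (hunit : ∀ (u : R) (x y : S), IsUnit u → x ≠ 0 → y ≠ 0 →
      algebraMap R S u * (x * σ x) = y * σ y → ∃ v, v * σ v = algebraMap R S u)
    (hram : ∀ P : Ideal S, P.IsPrime → P ≠ ⊥ →
      P * P = (P.under R).map (algebraMap R S) → (∀ x, σ x - x ∈ P) → P.IsPrincipal)
    (I : Ideal S) (hI0 : I ≠ ⊥) (hI : (I ^ 2).IsPrincipal) : I.IsPrincipal := by
  obtain ⟨a, ha⟩ := hI
  rw [Ideal.submodule_span_eq] at ha
  have hN : (Ideal.relNorm R I).IsPrincipal := by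
    refine isPrincipal_of_odd_pow hm ⟨Algebra.intNorm R S a, ?_⟩ (hR _)
    rw [← map_pow, ha, Ideal.relNorm_singleton]
  obtain ⟨n, hn⟩ := hN
  rw [Ideal.submodule_span_eq] at hn
  have hII := h.mul_map I
  rw [hn, Ideal.map_span, Set.image_singleton] at hII
  set y := algebraMap R S n with hy
  have hIσ0 : I.map σ ≠ 0 := fun h0 ↦ hI0 (by
    rw [← h.map_map I, h0, Ideal.zero_eq_bot, Ideal.map_bot])
  have hI0' : I ≠ 0 := hI0
  have hy0 : y ≠ 0 := by
    intro h0
    rw [h0, Ideal.span_singleton_zero] at hII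
    exact mul_ne_zero hI0' hIσ0 hII
  have ha0 : a ≠ 0 := by
    intro h0
    rw [h0, Ideal.span_singleton_zero] at ha
    exact pow_ne_zero 2 hI0' ha
  have hrel : Ideal.span {a} * I.map σ = Ideal.span {y} * I := by
    rw [← ha, ← hII]
    ring
  have hrel' : Ideal.span {σ a} * I = Ideal.span {σ y} * I.map σ := by
    have := congrArg (Ideal.map σ) hrel
    rwa [Ideal.map_mul, Ideal.map_mul, h.map_map, Ideal.map_span, Ideal.map_span,
      Set.image_singleton, Set.image_singleton] at this
  have hass : Associated (a * σ a) (y * σ y) := by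
    rw [← Ideal.span_singleton_eq_span_singleton]
    refine mul_right_cancel₀ (mul_ne_zero hI0' hIσ0) ?_
    rw [← Ideal.span_singleton_mul_span_singleton, ← Ideal.span_singleton_mul_span_singleton]
    calc _ = (Ideal.span {a} * I.map σ) * (Ideal.span {σ a} * I) := by ring
      _ = _ := by rw [hrel, hrel']; ring
  obtain ⟨u, hu⟩ := hass
  have haa : a * σ a ≠ 0 := mul_ne_zero ha0 (by simpa using ha0)
  have huσ : σ u = u := by
    refine mul_left_cancel₀ haa ?_
    have := congrArg σ hu
    simp only [map_mul, h.apply_apply] at this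
    rw [hu, mul_comm a, this, mul_comm]
  obtain ⟨r, hr⟩ := h.exists_eq_of_fixed u huσ
  have hr1 : IsUnit r := by
    have huσ' : σ (u⁻¹ : Sˣ) = (u⁻¹ : Sˣ) := by
      refine mul_left_cancel₀ u.ne_zero ?_
      nth_rewrite 1 [← huσ]
      rw [← map_mul]
      simp
    obtain ⟨s, hs⟩ := h.exists_eq_of_fixed _ huσ'
    refine IsUnit.of_mul_eq_one s (FaithfulSMul.algebraMap_injective R S ?_)
    rw [map_mul, hr, hs]
    simp
  obtain ⟨v, hv⟩ := hunit r a y hr1 ha0 hy0 (by rw [hr, mul_comm, hu])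
  have hvu : IsUnit v := isUnit_of_mul_isUnit_left (hv ▸ hr1.map (algebraMap R S))
  set x := v * a with hx
  have hx0 : x ≠ 0 := mul_ne_zero hvu.ne_zero ha0
  have hxy : x * σ x = y * σ y := by
    rw [hx, map_mul, ← hu, ← hr, ← hv]
    ring
  have hxI : Ideal.span {x} * I.map σ = Ideal.span {y} * I := by
    rw [← hrel, hx, ← Ideal.span_singleton_mul_span_singleton, Ideal.span_singleton_eq_top.2 hvu,
      Ideal.top_mul]
  obtain ⟨c, hc0, hc⟩ : ∃ c, c ≠ 0 ∧ y * σ c = x * c := by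
    by_cases hxy' : y = -x
    · obtain ⟨s, hs⟩ := h.exists_ne
      refine ⟨σ s - s, sub_ne_zero.2 hs, ?_⟩
      rw [hxy', map_sub, h.apply_apply]
      ring
    · refine ⟨y * σ y + σ x * y, fun h0 ↦ hxy' ?_, ?_⟩
      · have h1 : y * (σ (y + x)) = 0 := by
          rw [map_add, ← h0]
          ring
        have h2 : y + x = 0 := σ.map_eq_zero_iff.1 ((mul_eq_zero.1 h1).resolve_left hy0)
        exact eq_neg_of_add_eq_zero_left h2
      · simp only [map_add, map_mul, h.apply_apply]
        linear_combination y * (-hxy)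
  have hJσ : (I * Ideal.span {c}).map σ = I * Ideal.span {c} := by
    have hsx : Ideal.span {x} ≠ 0 := by simpa using hx0
    refine mul_left_cancel₀ hsx ?_
    rw [Ideal.map_mul, Ideal.map_span, Set.image_singleton]
    calc _ = (Ideal.span {x} * I.map σ) * Ideal.span {σ c} := by ring
      _ = (Ideal.span {y} * Ideal.span {σ c}) * I := by rw [hxI]; ring
      _ = (Ideal.span {x} * Ideal.span {c}) * I := by
        rw [Ideal.span_singleton_mul_span_singleton, hc, Ideal.span_singleton_mul_span_singleton]
      _ = _ := by ring
  have hsc : Ideal.span {c} ≠ 0 := by simpa using hc0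
  have hgood := h.invariant_induction (good := fun J ↦ (J ^ m).IsPrincipal) ?_ ?_ ?_
    (I * Ideal.span {c}) (mul_ne_zero hI0' hsc) hJσ
  · refine isPrincipal_of_odd_pow hm ⟨a, ha⟩ ?_
    rw [mul_pow, Ideal.span_singleton_pow] at hgood
    exact isPrincipal_of_mul_span (pow_ne_zero m hc0) hgood
  · rintro J K ⟨b, hb⟩ ⟨d, hd⟩
    refine ⟨b * d, ?_⟩
    rw [mul_pow, hb, hd, Ideal.submodule_span_eq, Ideal.submodule_span_eq,
      Ideal.span_singleton_mul_span_singleton]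
  · intro J _
    rw [← Ideal.map_pow]
    obtain ⟨b, hb⟩ := hR J
    refine ⟨algebraMap R S b, ?_⟩
    rw [hb, Ideal.submodule_span_eq, Ideal.map_span, Set.image_singleton]
  · intro P hP hP0 hPP hPσ
    obtain ⟨b, hb⟩ := hram P hP hP0 hPP hPσ
    refine ⟨b ^ m, ?_⟩
    rw [hb, Ideal.submodule_span_eq, Ideal.span_singleton_pow]

end IsQuadInvolution

end quadratic

theorem dvd_of_sq_eq {S : Type*} [CommRing S] [IsDomain S] [IsIntegrallyClosed S] {x c a b : S}
    (hc : c ≠ 0) (h : x ^ 2 = a * c * x - b * c ^ 2) : c ∣ x := by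
  have hc' : algebraMap S (FractionRing S) c ≠ 0 := by simpa using hc
  have h_int : IsIntegral S (algebraMap S (FractionRing S) x / algebraMap S (FractionRing S) c) := by
    refine ⟨Polynomial.X ^ 2 - Polynomial.C a * Polynomial.X + Polynomial.C b, by monicity!, ?_⟩
    have := congrArg (algebraMap S (FractionRing S)) h
    simp only [map_pow, map_sub, map_mul] at this
    simp only [Polynomial.eval₂_add, Polynomial.eval₂_sub, Polynomial.eval₂_mul,
      Polynomial.eval₂_pow, Polynomial.eval₂_X, Polynomial.eval₂_C]
    have hz := div_mul_cancel₀ (algebraMap S (FractionRing S) x) hc'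
    set z := algebraMap S (FractionRing S) x / algebraMap S (FractionRing S) c
    rw [← hz] at this
    refine mul_right_cancel₀ (pow_ne_zero 2 hc') ?_
    linear_combination this
  obtain ⟨y, hy⟩ := IsIntegrallyClosed.isIntegral_iff.1 h_int
  refine ⟨y, FaithfulSMul.algebraMap_injective S (FractionRing S) ?_⟩
  rw [map_mul, hy, mul_div_cancel₀ _ hc']

theorem eq_span_of_mul_self_eq {S : Type*} [CommRing S] [IsDedekindDomain S] {P : Ideal S}
    (hP : P.IsPrime) (hP0 : P ≠ ⊥) {w : S} (h : P * P = Ideal.span {w * w}) :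
    P = Ideal.span {w} := by
  have hw : w ∈ P := by
    have : w * w ∈ P := Ideal.mul_le_left (h ▸ Ideal.mem_span_singleton_self _)
    exact (hP.mem_or_mem this).elim id id
  obtain ⟨J, hJ⟩ := Ideal.dvd_iff_le.2 ((Ideal.span_singleton_le_iff_mem P).2 hw)
  rw [← Ideal.span_singleton_mul_span_singleton, hJ] at h
  have hPP : P * P ≠ 0 := mul_ne_zero hP0 hP0
  have hJJ : J * J = 1 := (mul_eq_left₀ hPP).1 (by rw [mul_mul_mul_comm]; exact h.symm)
  have hJ1 : J = 1 := by
    rw [Ideal.one_eq_top, eq_top_iff, ← Ideal.one_eq_top, ← hJJ]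
    exact Ideal.mul_le_left
  rw [hJ, hJ1, mul_one]

theorem eq_zero_of_prime_mul_sq_eq_add {q : ℕ} (hq : q.Prime) (hq4 : q % 4 = 3) {r s t : ℤ}
    (h : q * r ^ 2 = t ^ 2 + s ^ 2) : s = 0 := by
  by_contra hs
  have hr : r ≠ 0 := by
    rintro rfl
    have := sq_nonneg t
    have : 0 < s ^ 2 := by positivity
    linarith
  have hnat : q * r.natAbs ^ 2 = t.natAbs ^ 2 + s.natAbs ^ 2 := by
    zify
    simpa [sq_abs] using h
  have hev := Nat.eq_sq_add_sq_iff.1 ⟨_, _, hnat⟩ (q := q)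
  have : Fact q.Prime := ⟨hq⟩
  have hr' : r.natAbs ≠ 0 := by simpa using hr
  have hmem : q ∈ (q * r.natAbs ^ 2).primeFactors := by
    simp [hq, hq.ne_zero, hr']
  have h2 := hev hmem hq4
  rw [padicValNat.mul hq.ne_zero (pow_ne_zero 2 hr'), padicValNat.pow, padicValNat_self] at h2
  grind

section overInt

variable {S : Type*} [CommRing S] [IsDedekindDomain S] [CharZero S]
  {σ : S ≃ₐ[ℤ] S} {q : ℕ} {θ : S}

theorem eq_span_of_ramified (hq : q.Prime) (hθ : θ ^ 2 = q) (hσθ : σ θ = -θ) {c d : ℤ}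
    (hcd : c ^ 2 - q * d ^ 2 = 2) {P : Ideal S} (hP : P.IsPrime) (hP0 : P ≠ ⊥)
    (hPP : P * P = (P.under ℤ).map (algebraMap ℤ S)) (hPσ : ∀ x, σ x - x ∈ P) :
    P = Ideal.span {θ} ∨ P = Ideal.span {c + d * θ} := by
  have hsq : ∀ l : ℕ, l.Prime → (l : S) ∈ P → P * P = Ideal.span {(l : S)} := by
    intro l hl hlP
    have hle : Ideal.span {(l : ℤ)} ≤ P.under ℤ := by
      rw [Ideal.span_singleton_le_iff_mem, Ideal.mem_comap]
      simpa using hlP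
    have hmax : (Ideal.span {(l : ℤ)}).IsMaximal :=
      PrincipalIdealRing.isMaximal_of_irreducible (Nat.prime_iff_prime_int.1 hl).irreducible
    have heq := hmax.eq_of_le (Ideal.IsPrime.ne_top inferInstance) hle
    rw [hPP, ← heq, Ideal.map_span, Set.image_singleton]
    simp
  have h2θ : (2 : S) * θ ∈ P := by
    have := P.neg_mem (hPσ θ)
    rw [hσθ] at this
    convert this using 1
    ring
  rcases hP.mem_or_mem h2θ with h2 | hθP
  · right
    refine eq_span_of_mul_self_eq hP hP0 ?_
    rw [hsq 2 Nat.prime_two (by simpa using h2), Ideal.span_singleton_eq_span_singleton]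
    have hcdS : (c : S) ^ 2 - q * d ^ 2 = 2 := by exact_mod_cast congrArg (Int.cast (R := S)) hcd
    have hu : (c ^ 2 - 1 + c * d * θ : S) * (c ^ 2 - 1 - c * d * θ) = 1 := by
      linear_combination (-c ^ 2 * d ^ 2 : S) * hθ + (c ^ 2 : S) * hcdS
    refine ⟨Units.mkOfMulEqOne _ _ hu, ?_⟩
    rw [Units.val_mkOfMulEqOne]
    push_cast
    linear_combination -(d : S) ^ 2 * hθ + hcdS
  · left
    refine eq_span_of_mul_self_eq hP hP0 ?_
    rw [hsq q hq (by rw [← hθ]; exact P.pow_mem_of_mem hθP 2 two_pos), ← hθ, pow_two]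

variable [Module.Finite ℤ S]

namespace IsQuadInvolution

theorem exists_int (h : IsQuadInvolution σ) {x : S} (hx : σ x = x) : ∃ n : ℤ, (n : S) = x := by
  simpa using h.exists_eq_of_fixed x hx

theorem exists_int_norm (h : IsQuadInvolution σ) (x : S) : ∃ n : ℤ, (n : S) = x * σ x :=
  h.exists_int (by rw [map_mul, h.apply_apply, mul_comm])

theorem exists_two_mul_eq (h : IsQuadInvolution σ) (hq : q.Prime) (hθ : θ ^ 2 = q)
    (hσθ : σ θ = -θ) (x : S) :
    ∃ t r : ℤ, 2 * x = t + r * θ ∧ 4 * (x * σ x) = (t ^ 2 - q * r ^ 2 : ℤ) := by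
  have hq0 : (q : S) ≠ 0 := by simpa using hq.ne_zero
  have hθ0 : θ ≠ 0 := by
    rintro rfl
    simp [eq_comm, hq.ne_zero] at hθ
  obtain ⟨t, ht⟩ := h.exists_int (x := x + σ x) (by rw [map_add, h.apply_apply, add_comm])
  obtain ⟨n, hn⟩ := h.exists_int (x := (x - σ x) * θ) (by
    rw [map_mul, map_sub, h.apply_apply, hσθ]; ring)
  obtain ⟨e, he⟩ := h.exists_int (x := (x - σ x) ^ 2) (by
    rw [map_pow, map_sub, h.apply_apply]; ring)
  have hne : n ^ 2 = e * q := by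
    have : (n : S) ^ 2 = e * q := by rw [hn, he, ← hθ]; ring
    exact_mod_cast this
  obtain ⟨r, rfl⟩ := (Nat.prime_iff_prime_int.1 hq).dvd_of_dvd_pow ⟨e, by rw [hne, mul_comm]⟩
  have hr : x - σ x = r * θ := by
    refine mul_right_cancel₀ hθ0 ?_
    rw [← hn]
    push_cast
    rw [← hθ]
    ring
  refine ⟨t, r, by rw [← hr, ht]; ring, ?_⟩
  push_cast
  rw [ht, ← hθ]
  linear_combination -(x - σ x + r * θ) * hr

theorem neg_norm_ne_norm (h : IsQuadInvolution σ) (hq : q.Prime) (hq4 : q % 4 = 3)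
    (hθ : θ ^ 2 = q) (hσθ : σ θ = -θ) {x y : S} (hy : y ≠ 0) : -(x * σ x) ≠ y * σ y := by
  intro hxy
  obtain ⟨n, hn⟩ := h.exists_int_norm y
  obtain ⟨t, r, -, htr⟩ := h.exists_two_mul_eq hq hθ hσθ (x * σ y)
  have h1 : (t ^ 2 - q * r ^ 2 : ℤ) = - (2 * n) ^ 2 := by
    have : ((t ^ 2 - q * r ^ 2 : ℤ) : S) = - (2 * n) ^ 2 := by
      rw [← htr, map_mul, h.apply_apply, hn]
      linear_combination (-4 * y * σ y) * hxy
    exact_mod_cast this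
  have h2 := eq_zero_of_prime_mul_sq_eq_add hq hq4 (r := r) (t := t) (s := 2 * n)
    (by linear_combination -h1)
  have hn0 : n = 0 := by omega
  rw [hn0, Int.cast_zero] at hn
  have : y * σ y ≠ 0 := mul_ne_zero hy (by simpa using hy)
  exact this hn.symm

theorem isUnit_mul_apply (h : IsQuadInvolution σ) (hq : q.Prime) (hq4 : q % 4 = 3)
    (hθ : θ ^ 2 = q) (hσθ : σ θ = -θ) {u : S} (hu : IsUnit u) : u * σ u = 1 := by
  obtain ⟨n, hn⟩ := h.exists_int_norm u
  obtain ⟨m, hm⟩ := h.exists_int_norm (hu.unit⁻¹ : Sˣ)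
  have hnm : n * m = 1 := by
    have : (n * m : S) = 1 := by
      rw [hn, hm]
      calc _ = u * (hu.unit⁻¹ : Sˣ) * σ (u * (hu.unit⁻¹ : Sˣ)) := by rw [map_mul]; ring
        _ = 1 := by simp
    exact_mod_cast this
  rcases Int.isUnit_iff.1 (IsUnit.of_mul_eq_one m hnm) with rfl | rfl
  · rw [← hn, Int.cast_one]
  · refine absurd ?_ (h.neg_norm_ne_norm hq hq4 hθ hσθ (x := u) (y := 1) one_ne_zero)
    rw [← hn]
    simp

theorem int_dvd_of_dvd (h : IsQuadInvolution σ) {p n : ℤ} (hpn : (p : S) ∣ n) : p ∣ n := by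
  by_cases hp : p = 0
  · subst hp
    simpa using hpn
  obtain ⟨w, hw⟩ := hpn
  have hp' : (p : S) ≠ 0 := by exact_mod_cast hp
  obtain ⟨k, hk⟩ := h.exists_int (x := w) (by
    refine mul_left_cancel₀ hp' ?_
    rw [← hw, ← map_intCast σ p, ← map_mul, ← hw, map_intCast])
  refine ⟨k, ?_⟩
  rw [← hk] at hw
  exact_mod_cast hw

theorem prime_of_inert (h : IsQuadInvolution σ) (hq : q.Prime) (hθ : θ ^ 2 = q)
    (hσθ : σ θ = -θ) {p : ℕ} (hp : p.Prime) (hp2 : p ≠ 2) (hqp : jacobiSym q p = -1) :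
    Prime (p : S) := by
  have hpZ : Prime (p : ℤ) := Nat.prime_iff_prime_int.1 hp
  have : Fact p.Prime := ⟨hp⟩
  have key : ∀ x : S, (p : S) ∣ x * σ x → (p : S) ∣ x := by
    intro x hx
    obtain ⟨t, r, h1, h2⟩ := h.exists_two_mul_eq hq hθ hσθ x
    have hdvd : (p : ℤ) ∣ t ^ 2 - q * r ^ 2 := by
      refine h.int_dvd_of_dvd ?_
      rw [← h2, Int.cast_natCast]
      exact hx.mul_left 4
    have hr : (p : ℤ) ∣ r ∧ (p : ℤ) ∣ t := by
      have hr : (p : ℤ) ∣ r := by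
        by_contra hr
        rw [← jacobiSym.legendreSym.to_jacobiSym, legendreSym.eq_neg_one_iff] at hqp
        have hr0 : (r : ZMod p) ≠ 0 := by rwa [Ne, ZMod.intCast_zmod_eq_zero_iff_dvd]
        have h0 := (ZMod.intCast_zmod_eq_zero_iff_dvd _ p).2 hdvd
        push_cast at h0
        refine hqp ⟨t / r, ?_⟩
        push_cast
        field_simp
        linear_combination -h0
      refine ⟨hr, hpZ.dvd_of_dvd_pow (n := 2) ?_⟩
      have := dvd_add hdvd ((dvd_pow hr two_ne_zero).mul_left q)
      rwa [sub_add_cancel] at this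
    obtain ⟨⟨r', rfl⟩, ⟨t', rfl⟩⟩ := hr
    obtain ⟨j, hj⟩ := hp.odd_of_ne_two hp2
    refine ⟨x - j * (t' + r' * θ), ?_⟩
    have hj' : (p : S) = 2 * j + 1 := by exact_mod_cast hj
    push_cast at h1
    linear_combination (-j : S) * h1 - x * hj'
  refine ⟨by exact_mod_cast hp.ne_zero, ?_, ?_⟩
  · intro hu
    have h1 : ((p : ℤ) : S) ∣ (1 : ℤ) := by simpa using hu.dvd (a := 1)
    exact hpZ.not_isUnit (isUnit_of_dvd_one (h.int_dvd_of_dvd h1))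
  · intro x y hxy
    obtain ⟨n, hn⟩ := h.exists_int_norm x
    obtain ⟨m, hm⟩ := h.exists_int_norm y
    have : (p : ℤ) ∣ n * m := by
      refine h.int_dvd_of_dvd ?_
      push_cast
      rw [hn, hm]
      refine (hxy.mul_right (σ (x * y))).trans (dvd_of_eq ?_)
      rw [map_mul]
      ring
    refine (hpZ.dvd_or_dvd this).imp (fun hd ↦ key x ?_) (fun hd ↦ key y ?_)
    · rw [← hn]
      simpa using (Int.castRingHom S).map_dvd hd
    · rw [← hm]
      simpa using (Int.castRingHom S).map_dvd hd

/-- The units of the ring of integers are generated by `-1`, one explicit unit and squares. -/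
theorem unit_induction (h : IsQuadInvolution σ) (hq : q.Prime)
    (hq4 : q % 4 = 3) (hθ : θ ^ 2 = q) (hσθ : σ θ = -θ) {c d : ℤ} (hcd : c ^ 2 - q * d ^ 2 = 2)
    {N : S → Prop} (hmul : ∀ x y, N x → N y → N (x * y)) (hsq : ∀ v, IsUnit v → N (v ^ 2))
    (hneg : N (-1)) (hε : N (c ^ 2 - 1 + c * d * θ)) {u : S} (hu : IsUnit u) : N u := by
  by_cases hu1 : u = -1
  · rwa [hu1]
  have hcdS : (c : S) ^ 2 - q * d ^ 2 = 2 := by exact_mod_cast congrArg (Int.cast (R := S)) hcd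
  have huσ := h.isUnit_mul_apply hq hq4 hθ hσθ hu
  have hδ0 : 1 + u ≠ 0 := fun h0 ↦ hu1 (eq_neg_of_add_eq_zero_right h0)
  have hδ : 1 + u = u * σ (1 + u) := by
    rw [map_add, map_one, mul_add, huσ]
    ring
  have hinv : (Ideal.span {1 + u}).map σ = Ideal.span {1 + u} := by
    rw [Ideal.map_span, Set.image_singleton, Ideal.span_singleton_eq_span_singleton]
    exact ⟨hu.unit, by rw [IsUnit.unit_spec, mul_comm, ← hδ]⟩
  have hθ0 : θ ≠ 0 := by
    rintro rfl
    simp [eq_comm, hq.ne_zero] at hθ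
  have hgood := h.invariant_induction
    (good := fun I ↦ ∃ δ, δ ≠ 0 ∧ I = Ideal.span {δ} ∧ ∃ w, N w ∧ δ = w * σ δ) ?_ ?_ ?_ _
    (by simpa using hδ0) hinv
  · obtain ⟨δ, -, hspan, w, hw, hδ'⟩ := hgood
    obtain ⟨v, hv⟩ := Ideal.span_singleton_eq_span_singleton.1 hspan
    have hvσ := h.isUnit_mul_apply hq hq4 hθ hσθ v.isUnit
    have hσ0 : σ (1 + u) ≠ 0 := by
      rw [Ne, EmbeddingLike.map_eq_zero_iff]
      exact hδ0
    have hu2 : u = w * σ v ^ 2 := by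
      refine mul_right_cancel₀ hσ0 ?_
      have h1 : (1 + u) * v = w * (σ (1 + u) * σ v) := by rw [← map_mul, hv, ← hδ']
      linear_combination σ v * h1 - hδ - (1 + u) * hvσ
    rw [hu2]
    exact hmul _ _ hw (hsq _ (v.isUnit.map σ))
  · rintro _ _ ⟨δ₁, h₁, rfl, w₁, hw₁, e₁⟩ ⟨δ₂, h₂, rfl, w₂, hw₂, e₂⟩
    refine ⟨δ₁ * δ₂, mul_ne_zero h₁ h₂, Ideal.span_singleton_mul_span_singleton _ _, w₁ * w₂,
      hmul _ _ hw₁ hw₂, ?_⟩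
    rw [map_mul]
    nth_rewrite 1 [e₁, e₂]
    ring
  · intro J hJ
    obtain ⟨n, hn⟩ := IsPrincipalIdealRing.principal J
    rw [Ideal.submodule_span_eq] at hn
    refine ⟨n, ?_, ?_, 1, by simpa using hsq 1 isUnit_one, by simp⟩
    · rintro h0
      rw [Int.cast_eq_zero] at h0
      rw [hn, h0, Ideal.span_singleton_zero] at hJ
      exact hJ rfl
    · rw [hn, Ideal.map_span, Set.image_singleton]
      simp
  · intro P hP hP0 hPP hPσ
    rcases eq_span_of_ramified hq hθ hσθ hcd hP hP0 hPP hPσ with hs | hs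
    · exact ⟨θ, hθ0, hs, -1, hneg, by rw [hσθ]; ring⟩
    · refine ⟨_, ?_, hs, _, hε, ?_⟩
      · intro h0
        rw [hs, h0, Ideal.span_singleton_zero] at hP0
        exact hP0 rfl
      · simp only [map_add, map_mul, map_intCast, hσθ]
        linear_combination (c * d ^ 2 : S) * hθ - (c : S) * hcdS

end IsQuadInvolution

end overInt

theorem exists_sq_of_coprime_mul_eq {D m n s : ℕ} (hD : D ≠ 0) (hmn : m.Coprime n)
    (h : m * n = D * s ^ 2) :
    ∃ d₁ d₂ a b, d₁ * d₂ = D ∧ m = d₁ * a ^ 2 ∧ n = d₂ * b ^ 2 := by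
  have hd : D.gcd m * D.gcd n = D := by
    rw [← hmn.gcd_mul, h, Nat.gcd_eq_left (dvd_mul_right _ _)]
  obtain ⟨m', hm⟩ := Nat.gcd_dvd_right D m
  obtain ⟨n', hn⟩ := Nat.gcd_dvd_right D n
  have hcop : m'.Coprime n' := (hmn.coprime_dvd_left ⟨_, hm.trans (mul_comm _ _)⟩).coprime_dvd_right
    ⟨_, hn.trans (mul_comm _ _)⟩
  have hsq : m' * n' = s ^ 2 := by
    refine Nat.eq_of_mul_eq_mul_left (Nat.pos_of_ne_zero hD) ?_
    rw [← h]
    calc D * (m' * n') = (D.gcd m * m') * (D.gcd n * n') := by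
          nth_rewrite 1 [← hd]
          ring
      _ = m * n := by rw [← hm, ← hn]
  obtain ⟨a, ha⟩ := exists_associated_pow_of_mul_eq_pow (Nat.isUnit_iff.2 hcop) hsq
  obtain ⟨b, hb⟩ := exists_associated_pow_of_mul_eq_pow (Nat.isUnit_iff.2 hcop.symm) ((mul_comm _ _).trans hsq)
  rw [associated_iff_eq] at ha hb
  exact ⟨_, _, a, b, hd, by rw [ha]; exact hm, by rw [hb]; exact hn⟩

/-- Splitting the fundamental solution of the Pell equation. -/
theorem exists_pell_splitting {D : ℕ} (hodd : Odd D) (hD : ¬ IsSquare D) :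
    ∃ d₁ d₂ a b : ℕ, d₁ * d₂ = D ∧
      (d₁ * a ^ 2 = d₂ * b ^ 2 + 2 ∨ d₁ * a ^ 2 = d₂ * b ^ 2 + 1 ∧ d₁ ≠ 1) := by
  have hDpos : 0 < D := hodd.pos
  obtain ⟨x, hx⟩ := Pell.IsFundamental.exists_of_not_isSquare (d := D) (by exact_mod_cast hDpos) (by
    rwa [Int.isSquare_natCast_iff])
  have hxp := x.prop
  obtain ⟨hx1, hy0, -⟩ := id hx
  obtain ⟨T, hT⟩ := Int.eq_ofNat_of_zero_le (show 0 ≤ x.x by linarith)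
  obtain ⟨U, hU⟩ := Int.eq_ofNat_of_zero_le hy0.le
  rw [hT, hU] at hxp
  have hTU : T ^ 2 = D * U ^ 2 + 1 := by
    zify
    linear_combination hxp
  have hT1 : 1 < T := by
    rw [hT] at hx1
    exact_mod_cast hx1
  rcases Nat.even_or_odd' T with ⟨s, rfl | rfl⟩
  · obtain ⟨t, rfl⟩ := Nat.exists_eq_add_of_lt (show 0 < s by omega)
    have hcop : Nat.Coprime (2 * t + 3) (2 * t + 1) := by
      rw [show 2 * t + 3 = 2 + (2 * t + 1) by ring, Nat.coprime_add_self_left]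
      simp
    obtain ⟨d₁, d₂, a, b, hd, h1, h2⟩ := exists_sq_of_coprime_mul_eq (s := U) hDpos.ne' hcop (by
      linarith)
    exact ⟨d₁, d₂, a, b, hd, .inl (by rw [← h1, ← h2])⟩
  · have hU2 : Even U := by
      have : Even (D * U ^ 2) := by
        refine ⟨2 * (s ^ 2 + s), ?_⟩
        linarith
      rw [Nat.even_mul, Nat.even_pow] at this
      exact (this.resolve_left (Nat.not_even_iff_odd.2 hodd)).1
    obtain ⟨V, rfl⟩ := hU2
    obtain ⟨d₁, d₂, a, b, hd, h1, h2⟩ := exists_sq_of_coprime_mul_eq (m := s + 1) (n := s) (s := V)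
      hDpos.ne' (by simp) (by linarith)
    refine ⟨d₁, d₂, a, b, hd, .inr ⟨by rw [← h1, ← h2], ?_⟩⟩
    rintro rfl
    rw [one_mul] at h1 hd
    subst hd
    have hb : b ≠ 0 := by
      rintro rfl
      omega
    have ha : 1 < a := by
      by_contra ha
      have : a ^ 2 ≤ 1 := by nlinarith
      omega
    have := hx.x_le_x (a := Pell.Solution₁.mk a b (by
      have : a ^ 2 = d₂ * b ^ 2 + 1 := by rw [← h1, ← h2]
      rw [sub_eq_iff_eq_add]
      norm_cast
      rw [this, add_comm])) (by simpa using ha)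
    rw [hT, Pell.Solution₁.x_mk] at this
    have h3 : 2 * s + 1 ≤ a := by exact_mod_cast this
    nlinarith

theorem exists_sq_sub_prime_mul_sq_eq_neg_one {p : ℕ} (hp : p.Prime) (hp4 : p % 4 = 1)
    (h2p : jacobiSym 2 p = -1) : ∃ a b : ℤ, a ^ 2 - p * b ^ 2 = -1 := by
  have : Fact p.Prime := ⟨hp⟩
  rw [← jacobiSym.legendreSym.to_jacobiSym, legendreSym.eq_neg_one_iff] at h2p
  have hneg : IsSquare (-1 : ZMod p) := ZMod.exists_sq_eq_neg_one_iff.2 (by omega)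
  push_cast at h2p
  obtain ⟨d₁, d₂, a, b, hd, h | ⟨h, h1⟩⟩ := exists_pell_splitting (D := p)
    (Nat.odd_iff.2 (by omega)) (Nat.Prime.prime hp).irreducible.not_isSquare
  · have hz := congrArg (Nat.cast (R := ZMod p)) h
    push_cast at hz
    refine absurd ?_ h2p
    rcases (Nat.dvd_prime hp).1 (Dvd.intro _ hd) with rfl | rfl
    · obtain rfl : d₂ = p := by omega
      exact ⟨a, by simpa [pow_two] using hz.symm⟩
    · obtain rfl : d₂ = 1 := by simpa [hp.ne_zero] using hd
      have : (2 : ZMod d₁) = -1 * (b * b) := by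
        simp only [CharP.cast_eq_zero] at hz
        push_cast at hz
        linear_combination -hz
      rw [this]
      exact hneg.mul ⟨b, rfl⟩
  · obtain rfl := ((Nat.dvd_prime hp).1 (Dvd.intro _ hd)).resolve_left h1
    obtain rfl : d₂ = 1 := by simpa [hp.ne_zero] using hd
    zify at h
    exact ⟨b, a, by linear_combination -h⟩

theorem exists_sq_sub_prime_mul_sq_eq_two {q : ℕ} (hq : q.Prime) (hq4 : q % 4 = 3)
    (h2q : jacobiSym 2 q = 1) : ∃ c d : ℤ, c ^ 2 - q * d ^ 2 = 2 := by
  have : Fact q.Prime := ⟨hq⟩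
  have hq2 : (2 : ZMod q) ≠ 0 := ZMod.prime_ne_zero q 2 (by omega)
  rw [← jacobiSym.legendreSym.to_jacobiSym, legendreSym.eq_one_iff _ (by exact_mod_cast hq2)] at h2q
  have hneg : ¬ IsSquare (-1 : ZMod q) := fun h ↦ ZMod.exists_sq_eq_neg_one_iff.1 h hq4
  push_cast at h2q
  obtain ⟨d₁, d₂, a, b, hd, h | ⟨h, h1⟩⟩ := exists_pell_splitting (D := q)
    (Nat.odd_iff.2 (by omega)) (Nat.Prime.prime hq).irreducible.not_isSquare
  · rcases (Nat.dvd_prime hq).1 (Dvd.intro _ hd) with rfl | rfl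
    · obtain rfl : d₂ = q := by omega
      zify at h
      exact ⟨a, b, by linear_combination h⟩
    · obtain rfl : d₂ = 1 := by simpa [hq.ne_zero] using hd
      have hz := congrArg (Nat.cast (R := ZMod d₁)) h
      simp only [Nat.cast_add, Nat.cast_mul, Nat.cast_pow, CharP.cast_eq_zero] at hz
      push_cast at hz
      obtain ⟨s, hs⟩ := h2q
      have hs0 : s ≠ 0 := by
        rintro rfl
        exact hq2 (by simpa using hs)
      refine absurd ⟨b / s, ?_⟩ hneg
      field_simp
      linear_combination hz + hs
  · obtain rfl := ((Nat.dvd_prime hq).1 (Dvd.intro _ hd)).resolve_left h1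
    obtain rfl : d₂ = 1 := by simpa [hq.ne_zero] using hd
    have hz := congrArg (Nat.cast (R := ZMod d₁)) h
    simp only [Nat.cast_add, Nat.cast_mul, Nat.cast_pow, CharP.cast_eq_zero] at hz
    push_cast at hz
    exact absurd ⟨b, by linear_combination hz⟩ hneg

theorem jacobiSym_swap_eq_neg_one {p q : ℕ} (hp4 : p % 4 = 1) (hq4 : q % 4 = 3)
    (hpq : jacobiSym p q = -1) : jacobiSym q p = -1 := by
  rw [← jacobiSym.quadratic_reciprocity_one_mod_four hp4 (Nat.odd_iff.2 (by omega)), hpq]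

theorem not_isSquare_prime_mul_prime {p q : ℕ} (hp : p.Prime) (hq : q.Prime) (hne : p ≠ q) :
    ¬ IsSquare (p * q) := by
  rintro ⟨r, hr⟩
  have hpr : p ∣ r := (Nat.Prime.dvd_mul hp).1 (hr ▸ dvd_mul_right p q) |>.elim id id
  obtain ⟨r', rfl⟩ := hpr
  have : q = p * (r' * r') := Nat.eq_of_mul_eq_mul_left hp.pos (by rw [hr]; ring)
  exact hne ((Nat.prime_dvd_prime_iff_eq hp hq).1 ⟨_, this⟩)

theorem exists_prime_mul_sq_sub_prime_mul_sq_eq_two {p q : ℕ} (hp : p.Prime) (hq : q.Prime)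
    (hp4 : p % 4 = 1) (hq4 : q % 4 = 3) (h2p : jacobiSym 2 p = -1) (h2q : jacobiSym 2 q = 1)
    (hpq : jacobiSym p q = -1) : ∃ e f : ℤ, q * e ^ 2 - p * f ^ 2 = 2 := by
  have : Fact p.Prime := ⟨hp⟩
  have : Fact q.Prime := ⟨hq⟩
  have hqp := jacobiSym_swap_eq_neg_one hp4 hq4 hpq
  have hq2 : (2 : ZMod q) ≠ 0 := ZMod.prime_ne_zero q 2 (by omega)
  rw [← jacobiSym.legendreSym.to_jacobiSym, legendreSym.eq_neg_one_iff] at h2p hpq hqp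
  rw [← jacobiSym.legendreSym.to_jacobiSym, legendreSym.eq_one_iff _ (by exact_mod_cast hq2)] at h2q
  have hneg : ¬ IsSquare (-1 : ZMod q) := fun h ↦ ZMod.exists_sq_eq_neg_one_iff.1 h hq4
  have hneg' : IsSquare (-1 : ZMod p) := ZMod.exists_sq_eq_neg_one_iff.2 (by omega)
  push_cast at h2p h2q hpq hqp
  have hne : p ≠ q := by
    rintro rfl
    omega
  obtain ⟨d₁, d₂, a, b, hd, h⟩ := exists_pell_splitting (D := p * q)
    ((Nat.odd_iff.2 (by omega)).mul (Nat.odd_iff.2 (by omega)))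
    (not_isSquare_prime_mul_prime hp hq hne)
  have hcases : (d₁ = 1 ∧ d₂ = p * q) ∨ (d₁ = p ∧ d₂ = q) ∨ (d₁ = q ∧ d₂ = p) ∨
      (d₁ = p * q ∧ d₂ = 1) := by
    obtain ⟨y, z, hy, hz, rfl⟩ := Nat.dvd_mul.1 (Dvd.intro _ hd)
    have := hp.pos
    have := hq.pos
    rcases (Nat.dvd_prime hp).1 hy with rfl | rfl <;>
      rcases (Nat.dvd_prime hq).1 hz with rfl | rfl
    · simp_all
    · right; right; left
      refine ⟨one_mul _, Nat.eq_of_mul_eq_mul_left hq.pos ?_⟩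
      linarith
    · right; left
      refine ⟨mul_one _, Nat.eq_of_mul_eq_mul_left hp.pos ?_⟩
      linarith
    · right; right; right
      refine ⟨rfl, Nat.eq_of_mul_eq_mul_left (mul_pos hp.pos hq.pos) ?_⟩
      linarith
  have not_mul_eq : ∀ {l : ℕ} [Fact l.Prime] {r x y : ZMod l}, ¬ IsSquare r → IsSquare y → y ≠ 0 →
      r * x ^ 2 ≠ y := by
    rintro l _ r x _ hr ⟨s, rfl⟩ hy hx
    have hx0 : x ≠ 0 := by
      rintro rfl
      exact hy (by simpa using hx.symm)
    refine hr ⟨s / x, ?_⟩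
    field_simp
    exact hx.trans (pow_two s).symm
  rcases hcases with ⟨rfl, rfl⟩ | ⟨rfl, rfl⟩ | ⟨rfl, rfl⟩ | ⟨rfl, rfl⟩
  · obtain h | ⟨h, h1⟩ := h
    · have hz := congrArg (Nat.cast (R := ZMod p)) h
      push_cast at hz
      simp only [CharP.cast_eq_zero] at hz
      exact absurd ⟨a, by linear_combination -hz⟩ h2p
    · exact absurd rfl h1
  · obtain h | ⟨h, h1⟩ := h
    · have hz := congrArg (Nat.cast (R := ZMod d₂)) h
      push_cast at hz
      simp only [CharP.cast_eq_zero] at hz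
      exact absurd (by simpa using hz) (not_mul_eq (x := a) hpq h2q hq2)
    · have hz := congrArg (Nat.cast (R := ZMod d₂)) h
      push_cast at hz
      simp only [CharP.cast_eq_zero] at hz
      exact absurd (by simpa using hz) (not_mul_eq (x := a) hpq IsSquare.one one_ne_zero)
  · obtain h | ⟨h, h1⟩ := h
    · zify at h
      exact ⟨a, b, by linear_combination h⟩
    · have hz := congrArg (Nat.cast (R := ZMod d₂)) h
      push_cast at hz
      simp only [CharP.cast_eq_zero] at hz
      exact absurd (by simpa using hz) (not_mul_eq (x := a) hqp IsSquare.one one_ne_zero)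
  · obtain h | ⟨h, h1⟩ := h
    · have hz := congrArg (Nat.cast (R := ZMod p)) h
      push_cast at hz
      simp only [CharP.cast_eq_zero] at hz
      have : (2 : ZMod p) = -1 * (b * b) := by linear_combination -hz
      refine absurd ?_ h2p
      rw [this]
      exact hneg'.mul ⟨b, rfl⟩
    · have hz := congrArg (Nat.cast (R := ZMod q)) h
      push_cast at hz
      simp only [CharP.cast_eq_zero] at hz
      exact absurd ⟨b, by linear_combination hz⟩ hneg

theorem finrank_eq_two_of_adjoin_sqrt {F E : Type*} [Field F] [Field E] [Algebra F E] {s : E} {a : F}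
    (hs : s ^ 2 = algebraMap F E a) (hsF : s ∉ (algebraMap F E).range) (htop : F⟮s⟯ = ⊤) :
    Module.finrank F E = 2 := by
  have hmonic : (Polynomial.X ^ 2 - Polynomial.C a : Polynomial F).Monic :=
    Polynomial.monic_X_pow_sub_C a two_ne_zero
  have hroot : Polynomial.aeval s (Polynomial.X ^ 2 - Polynomial.C a : Polynomial F) = 0 := by
    simp [hs]
  have h_int : IsIntegral F s := ⟨_, hmonic, hroot⟩
  rw [← IntermediateField.finrank_top', ← htop, IntermediateField.adjoin.finrank h_int]
  refine le_antisymm ?_ ((minpoly.two_le_natDegree_iff h_int).2 hsF)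
  rw [← Polynomial.natDegree_X_pow_sub_C (n := 2) (r := a)]
  exact Polynomial.natDegree_le_of_dvd (minpoly.dvd F s hroot) hmonic.ne_zero

theorem exists_algEquiv_sqrt_eq_neg {F E : Type*} [Field F] [CharZero F] [Field E] [Algebra F E]
    {s : E} {a : F} (hs : s ^ 2 = algebraMap F E a) (hsF : s ∉ (algebraMap F E).range)
    (hrank : Module.finrank F E = 2) : ∃ τ : E ≃ₐ[F] E, τ s = -s := by
  have : Algebra.IsQuadraticExtension F E := ⟨hrank⟩
  have : FiniteDimensional F E := Module.finite_of_finrank_eq_succ hrank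
  by_contra! h
  refine hsF (IntermediateField.mem_bot.1 ((IsGalois.mem_bot_iff_fixed s).2 fun τ ↦ ?_))
  have : (τ s) ^ 2 = s ^ 2 := by
    rw [← map_pow, hs, τ.commutes]
  exact (sq_eq_sq_iff_eq_or_eq_neg.1 this).resolve_right (h τ)

theorem isQuadInvolution_galRestrict {A K L B : Type*} [CommRing A] [IsDedekindDomain A] [Field K]
    [CharZero K] [Field L] [CommRing B] [IsDedekindDomain B] [Algebra A B] [Algebra A K]
    [Algebra A L] [Algebra B L] [Algebra K L] [IsScalarTower A K L] [IsScalarTower A B L]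
    [IsFractionRing A K] [IsFractionRing B L] [IsIntegralClosure B A L] [Module.Finite A B]
    [Module.IsTorsionFree A B]
    [FiniteDimensional K L] {s : L} {τ : L ≃ₐ[K] L} (hrank : Module.finrank K L = 2)
    (hs : τ s ≠ s) : IsQuadInvolution (galRestrict A K L B τ) := by
  have : Algebra.IsQuadraticExtension K L := ⟨hrank⟩
  have hτ : τ ≠ 1 := by
    rintro rfl
    exact hs rfl
  have hcard := IsGalois.card_aut_eq_finrank K L
  rw [hrank] at hcard
  have huniv : ∀ υ : Gal(L/K), υ = 1 ∨ υ = τ := by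
    rw [Nat.card_eq_two_iff' 1] at hcard
    obtain ⟨υ, -, hυ⟩ := hcard
    intro ρ
    by_cases hρ : ρ = 1
    · exact .inl hρ
    · exact .inr ((hυ ρ hρ).trans (hυ τ hτ).symm)
  have hττ : ∀ x, τ (τ x) = x := by
    rcases huniv (τ * τ) with h | h
    · exact fun x ↦ congrArg (· x) h
    · exact absurd (mul_eq_left.1 h) hτ
  have hinj : Function.Injective (algebraMap B L) := IsFractionRing.injective B L
  refine ⟨?_, fun x ↦ hinj ?_, fun x hx ↦ ?_, fun x ↦ hinj ?_, ?_⟩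
  · rw [← hrank]
    exact (IsFractionRing.finrank_eq A K B L).symm
  · rw [algebraMap_galRestrict_apply, algebraMap_galRestrict_apply, hττ]
  · have hfix : algebraMap B L x ∈ (⊥ : IntermediateField K L) := by
      rw [IsGalois.mem_bot_iff_fixed]
      intro υ
      rcases huniv υ with rfl | rfl
      · rfl
      · rw [← algebraMap_galRestrict_apply A, hx]
    obtain ⟨y, hy⟩ := IntermediateField.mem_bot.1 hfix
    have hyint : IsIntegral A y := by
      have : IsIntegral A (algebraMap B L x) := (IsIntegralClosure.isIntegral A L x).algebraMap
      rw [← hy] at this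
      exact (isIntegral_algebraMap_iff (algebraMap K L).injective).1 this
    obtain ⟨r, rfl⟩ := IsIntegrallyClosed.isIntegral_iff.1 hyint
    refine ⟨r, hinj ?_⟩
    rw [← IsScalarTower.algebraMap_apply, ← hy, ← IsScalarTower.algebraMap_apply]
  · rw [← IsScalarTower.algebraMap_apply, IsScalarTower.algebraMap_apply A K L,
      Algebra.algebraMap_intNorm (K := K) (L := L), Algebra.norm_eq_prod_automorphisms, map_mul,
      algebraMap_galRestrict_apply]
    classical
    rw [show (Finset.univ : Finset Gal(L/K)) = {1, τ} by ext υ; simpa using huniv υ,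
      Finset.prod_pair hτ.symm]
    rfl
  · by_contra! h
    obtain ⟨x, y, hy, rfl⟩ := IsFractionRing.div_surjective (A := B) s
    apply hs
    rw [map_div₀, ← algebraMap_galRestrict_apply A, ← algebraMap_galRestrict_apply A, h, h]

theorem exists_isQuadInvolution {A : Type*} (K L : Type*) {B : Type*} [CommRing A]
    [IsDedekindDomain A] [Field K]
    [CharZero K] [Field L] [CommRing B] [IsDedekindDomain B] [Algebra A B] [Algebra A K]
    [Algebra A L] [Algebra B L] [Algebra K L] [IsScalarTower A K L] [IsScalarTower A B L]
    [IsFractionRing A K] [IsFractionRing B L] [IsIntegralClosure B A L] [Module.Finite A B]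
    [Module.IsTorsionFree A B] {s : B} {a : A} (hs : s ^ 2 = algebraMap A B a)
    (hsK : algebraMap B L s ∉ (algebraMap K L).range) (htop : K⟮algebraMap B L s⟯ = ⊤) :
    ∃ σ : B ≃ₐ[A] B, IsQuadInvolution σ ∧ σ s = -s := by
  have hs' : (algebraMap B L s) ^ 2 = algebraMap K L (algebraMap A K a) := by
    rw [← map_pow, hs, ← IsScalarTower.algebraMap_apply, ← IsScalarTower.algebraMap_apply]
  have hrank := finrank_eq_two_of_adjoin_sqrt hs' hsK htop
  have : FiniteDimensional K L := Module.finite_of_finrank_eq_succ hrank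
  obtain ⟨τ, hτ⟩ := exists_algEquiv_sqrt_eq_neg hs' hsK hrank
  refine ⟨galRestrict A K L B τ, isQuadInvolution_galRestrict (s := algebraMap B L s) hrank ?_,
    IsFractionRing.injective B L ?_⟩
  · rw [hτ]
    intro h
    have : CharZero L := charZero_of_injective_algebraMap (algebraMap K L).injective
    rw [neg_eq_self] at h
    exact hsK (h ▸ zero_mem _)
  · rw [algebraMap_galRestrict_apply, hτ, map_neg]

theorem odd_classNumber_of_isPrincipal {E : Type*} [Field E] [NumberField E]
    (h : ∀ I : Ideal (𝓞 E), I ≠ ⊥ → (I ^ 2).IsPrincipal → I.IsPrincipal) :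
    Odd (classNumber E) := by
  rw [← Nat.not_even_iff_odd, even_iff_two_dvd]
  intro h2
  have : Fact (Nat.Prime 2) := ⟨Nat.prime_two⟩
  obtain ⟨g, hg⟩ := exists_prime_orderOf_dvd_card 2 h2
  obtain ⟨⟨I, hI⟩, rfl⟩ := ClassGroup.mk0_surjective g
  have hI2 : ClassGroup.mk0 (⟨I, hI⟩ ^ 2 : nonZeroDivisors (Ideal (𝓞 E))) = 1 := by
    rw [map_pow, ← hg, pow_orderOf_eq_one]
  have hI1 : ClassGroup.mk0 (⟨I, hI⟩ : nonZeroDivisors (Ideal (𝓞 E))) = 1 := by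
    rw [ClassGroup.mk0_eq_one_iff] at hI2 ⊢
    exact h I (nonZeroDivisors.ne_zero hI) hI2
  rw [hI1, orderOf_one] at hg
  omega

theorem isPrincipal_pow_classNumber {E : Type*} [Field E] [NumberField E] (I : Ideal (𝓞 E)) :
    (I ^ classNumber E).IsPrincipal := by
  by_cases hI : I = ⊥
  · rw [hI, ← Ideal.zero_eq_bot, zero_pow (show classNumber E ≠ 0 from Fintype.card_ne_zero)]
    exact bot_isPrincipal
  · have hI' : I ∈ nonZeroDivisors (Ideal (𝓞 E)) := mem_nonZeroDivisors_of_ne_zero hI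
    have := pow_card_eq_one (x := ClassGroup.mk0 (⟨I, hI'⟩ : nonZeroDivisors (Ideal (𝓞 E))))
    rw [← map_pow, ClassGroup.mk0_eq_one_iff] at this
    exact this

namespace IsQuadInvolution

theorem isPrincipal_of_sq_of_int {S : Type*} [CommRing S] [IsDedekindDomain S] [CharZero S]
    [Module.Finite ℤ S] {σ : S ≃ₐ[ℤ] S} {q : ℕ} {θ : S} (h : IsQuadInvolution σ) (hq : q.Prime)
    (hq4 : q % 4 = 3) (hθ : θ ^ 2 = q) (hσθ : σ θ = -θ) {c d : ℤ} (hcd : c ^ 2 - q * d ^ 2 = 2)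
    {I : Ideal S} (hI0 : I ≠ ⊥) (hI : (I ^ 2).IsPrincipal) : I.IsPrincipal := by
  refine h.isPrincipal_of_sq odd_one (fun J ↦ IsPrincipalIdealRing.principal _) ?_ ?_ I hI0 hI
  · intro u x y hu _ hy hxy
    rcases Int.isUnit_iff.1 hu with rfl | rfl
    · exact ⟨1, by simp⟩
    · exact absurd (by simpa using hxy) (h.neg_norm_ne_norm hq hq4 hθ hσθ (x := x) hy)
  · intro P hP hP0 hPP hPσ
    rcases eq_span_of_ramified hq hθ hσθ hcd hP hP0 hPP hPσ with hs | hs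
    · exact ⟨_, hs⟩
    · exact ⟨_, hs⟩

section tower

variable {R S : Type*} [CommRing R] [CommRing S] [IsDedekindDomain R] [IsDedekindDomain S]
  [Algebra R S] [Module.IsTorsionFree R S] [CharZero R] [Module.Finite ℤ R]
  {σ : R ≃ₐ[ℤ] R} {τ : S ≃ₐ[R] S} {p q : ℕ} {θ : R} {π : S}

theorem eq_span_of_tower_ramified (h : IsQuadInvolution σ) (hp : p.Prime) (hq : q.Prime)
    (hp4 : p % 4 = 1) (hqp : jacobiSym q p = -1)
    (hθ : θ ^ 2 = q) (hσθ : σ θ = -θ) (hπ : π ^ 2 = p) (hτπ : τ π = -π)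
    {P : Ideal S} (hP : P.IsPrime) (hP0 : P ≠ ⊥)
    (hPP : P * P = (P.under R).map (algebraMap R S)) (hPτ : ∀ x, τ x - x ∈ P) :
    P = Ideal.span {π} := by
  have : CharZero S := charZero_of_injective_algebraMap (FaithfulSMul.algebraMap_injective R S)
  obtain ⟨j, hj⟩ : ∃ j, p = 4 * j + 1 := ⟨p / 4, by omega⟩
  have hj' : (p : S) = 4 * j + 1 := by
    rw [hj]
    push_cast
    ring
  obtain ⟨ω, hω⟩ : (2 : S) ∣ 1 + π :=
    dvd_of_sq_eq (a := 1) (b := -j) two_ne_zero (by linear_combination hπ + hj')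
  have hτω : τ ω - ω = -π := by
    refine mul_left_cancel₀ (two_ne_zero (α := S)) ?_
    have := congrArg τ hω
    simp only [map_add, map_mul, map_one, hτπ, map_ofNat] at this
    linear_combination hω - this
  have hπP : π ∈ P := by
    rw [← neg_mem_iff, ← hτω]
    exact hPτ ω
  have hpr := h.prime_of_inert hq hθ hσθ hp (by omega) hqp
  have hunder : Ideal.span {(p : R)} = P.under R := by
    have hprime : (Ideal.span {(p : R)}).IsPrime :=
      (Ideal.span_singleton_prime hpr.ne_zero).2 hpr
    have hmax := hprime.isMaximal (by simpa using hpr.ne_zero)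
    refine hmax.eq_of_le (Ideal.IsPrime.ne_top inferInstance) ?_
    rw [Ideal.span_singleton_le_iff_mem, Ideal.mem_comap, map_natCast, ← hπ]
    exact P.pow_mem_of_mem hπP 2 two_pos
  refine eq_span_of_mul_self_eq hP hP0 ?_
  rw [hPP, ← hunder, Ideal.map_span, Set.image_singleton, map_natCast, ← hπ, pow_two]

theorem exists_mul_apply_eq_of_isUnit (h : IsQuadInvolution σ)
    (hq : q.Prime) (hq4 : q % 4 = 3)
    (hθ : θ ^ 2 = q) (hσθ : σ θ = -θ) (hπ : π ^ 2 = p) (hτπ : τ π = -π)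
    {a b c d e f : ℤ} (hab : a ^ 2 - p * b ^ 2 = -1) (hcd : c ^ 2 - q * d ^ 2 = 2)
    (hef : q * e ^ 2 - p * f ^ 2 = 2) {u : R} (hu : IsUnit u) :
    ∃ v : S, v * τ v = algebraMap R S u := by
  have : CharZero S := charZero_of_injective_algebraMap (FaithfulSMul.algebraMap_injective R S)
  have cast_eq : ∀ {m n : ℤ}, m = n → (m : S) = n := fun hmn ↦ congrArg _ hmn
  have hab' := cast_eq hab
  have hcd' := cast_eq hcd
  have hef' := cast_eq hef
  push_cast at hab' hcd' hef'
  refine h.unit_induction (N := fun u ↦ ∃ v : S, v * τ v = algebraMap R S u) hq hq4 hθ hσθ hcd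
    ?_ ?_ ?_ ?_ hu
  · rintro x y ⟨v, hv⟩ ⟨w, hw⟩
    refine ⟨v * w, ?_⟩
    rw [map_mul, map_mul, ← hv, ← hw]
    ring
  · rintro v -
    refine ⟨algebraMap R S v, ?_⟩
    rw [AlgEquiv.commutes, map_pow, pow_two]
  · refine ⟨a + b * π, ?_⟩
    simp only [map_add, map_mul, map_intCast, hτπ, map_neg, map_one]
    linear_combination hab' - (b ^ 2 : S) * hπ
  · set t := algebraMap R S θ with ht
    have ht2 : t ^ 2 = q := by rw [ht, ← map_pow, hθ, map_natCast]
    have hτt : τ t = t := AlgEquiv.commutes _ _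
    have hw : (c + d * t) ^ 2 = 2 * (c ^ 2 - 1 + c * d * t : S) := by
      linear_combination (d ^ 2 : S) * ht2 - hcd'
    have hefπ : (e * t + f * π) * (e * t - f * π) = 2 := by
      linear_combination (e ^ 2 : S) * ht2 - (f ^ 2 : S) * hπ + hef'
    obtain ⟨v, hv⟩ : (2 : S) ∣ (c + d * t) * (e * t + f * π) := by
      refine dvd_of_sq_eq (a := (c + d * t) * (e * t)) (b := c ^ 2 - 1 + c * d * t) two_ne_zero ?_
      linear_combination -(c + d * t) ^ 2 * hefπ - 2 * hw
    refine ⟨v, ?_⟩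
    have hτv := congrArg τ hv
    simp only [map_add, map_mul, map_intCast, hτπ, hτt, map_ofNat] at hτv
    refine mul_left_cancel₀ (show (4 : S) ≠ 0 by norm_num) ?_
    simp only [map_add, map_mul, map_sub, map_pow, map_one, map_intCast, ← ht]
    calc 4 * (v * τ v) = (2 * v) * (2 * τ v) := by ring
      _ = (c + d * t) ^ 2 * ((e * t + f * π) * (e * t - f * π)) := by
        rw [← hv, ← hτv]
        ring
      _ = _ := by
        rw [hefπ, hw]
        ring

end tower

end IsQuadInvolution

theorem exists_ringOfIntegers_sq_eq {F : Type*} [Field F] [CharZero F] {x : F} {n : ℕ}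
    (hx : x ^ 2 = n) : ∃ y : 𝓞 F, algebraMap (𝓞 F) F y = x ∧ y ^ 2 = n := by
  have h_int : IsIntegral ℤ x := by
    refine IsIntegral.of_pow two_pos ?_
    rw [hx]
    exact_mod_cast isIntegral_algebraMap (R := ℤ) (A := F) (x := n)
  obtain ⟨y, rfl⟩ := (IsIntegralClosure.isIntegral_iff (A := 𝓞 F)).1 h_int
  refine ⟨y, rfl, RingOfIntegers.coe_injective ?_⟩
  rw [map_pow, hx, map_natCast]

theorem odd_classNumber_of_biquadratic {k E : Type*} [Field k] [NumberField k] [Field E]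
    [NumberField E] [Algebra k E] {p q : ℕ} (hp : p.Prime) (hq : q.Prime)
    (hp4 : p % 4 = 1) (hq4 : q % 4 = 3) (h2p : jacobiSym 2 p = -1) (h2q : jacobiSym 2 q = 1)
    (hpq : jacobiSym p q = -1) {s : k} {r : E} (hs : s ^ 2 = q) (hr : r ^ 2 = p)
    (hk : ℚ⟮s⟯ = ⊤) (hE : k⟮r⟯ = ⊤) : Odd (classNumber E) := by
  obtain ⟨a, b, hab⟩ := exists_sq_sub_prime_mul_sq_eq_neg_one hp hp4 h2p
  obtain ⟨c, d, hcd⟩ := exists_sq_sub_prime_mul_sq_eq_two hq hq4 h2q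
  obtain ⟨e, f, hef⟩ := exists_prime_mul_sq_sub_prime_mul_sq_eq_two hp hq hp4 hq4 h2p h2q hpq
  have hqp := jacobiSym_swap_eq_neg_one hp4 hq4 hpq
  have hne : p ≠ q := by
    rintro rfl
    omega
  obtain ⟨θ, rfl, hθ⟩ := exists_ringOfIntegers_sq_eq hs
  obtain ⟨π, rfl, hπ⟩ := exists_ringOfIntegers_sq_eq hr
  obtain ⟨σ, h, hσθ⟩ := exists_isQuadInvolution (A := ℤ) ℚ k (s := θ) (a := q) (by simpa using hθ) (by
    rintro ⟨x, hx⟩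
    have hx2 : (x ^ 2 : ℚ) = q := by
      refine (algebraMap ℚ k).injective ?_
      rw [map_pow, hx, hs, map_natCast]
    exact hq.prime.irreducible.not_isSquare
      (Rat.isSquare_natCast_iff.1 ⟨x, by rw [← hx2, pow_two]⟩)) hk
  obtain ⟨τ, h', hτπ⟩ := exists_isQuadInvolution (A := 𝓞 k) k E (s := π) (a := p)
    (by simpa using hπ) (by
      rintro ⟨x, hx⟩
      have hx2 : x ^ 2 = p := by
        refine (algebraMap k E).injective ?_
        rw [map_pow, hx, hr, map_natCast]
      obtain ⟨t, -, ht⟩ := exists_ringOfIntegers_sq_eq hx2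
      have hσt : σ t = t ∨ σ t = -t := by
        rw [← sq_eq_sq_iff_eq_or_eq_neg, ← map_pow, ht, map_natCast]
      rcases hσt with hσt | hσt
      · obtain ⟨n, rfl⟩ := h.exists_int hσt
        have hn : n ^ 2 = p := by exact_mod_cast ht
        exact hp.prime.irreducible.not_isSquare
          (Int.isSquare_natCast_iff.1 ⟨n, by rw [← hn, pow_two]⟩)
      · obtain ⟨n, hn⟩ := h.exists_int (x := t * θ) (by rw [map_mul, hσt, hσθ, neg_mul_neg])
        have hn : n ^ 2 = (p * q : ℕ) := by
          have : (n : 𝓞 k) ^ 2 = p * q := by rw [hn, mul_pow, ht, hθ]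
          exact_mod_cast this
        exact not_isSquare_prime_mul_prime hp hq hne
          (Int.isSquare_natCast_iff.1 ⟨n, by rw [← hn, pow_two]⟩)) hE
  have hodd : Odd (classNumber k) := odd_classNumber_of_isPrincipal fun I hI0 hI ↦
    h.isPrincipal_of_sq_of_int hq hq4 hθ hσθ hcd hI0 hI
  refine odd_classNumber_of_isPrincipal fun I hI0 hI ↦
    h'.isPrincipal_of_sq hodd isPrincipal_pow_classNumber ?_ ?_ I hI0 hI
  · intro u _ _ hu _ _ _
    exact h.exists_mul_apply_eq_of_isUnit hq hq4 hθ hσθ hπ hτπ hab hcd hef hu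
  · intro P hP hP0 hPP hPτ
    exact ⟨π, h.eq_span_of_tower_ramified hp hq hp4 hqp hθ hσθ hπ hτπ hP hP0 hPP hPτ⟩

theorem adjoin_simple_gen_eq_top {F E : Type*} [Field F] [Field E] [Algebra F E] (s : E) :
    F⟮AdjoinSimple.gen F s⟯ = ⊤ := by
  refine map_injective F⟮s⟯.val ?_
  rw [adjoin_map, ← AlgHom.fieldRange_eq_map, fieldRange_val, Set.image_singleton]
  rfl

theorem odd_classNumber_of_adjoin_sqrt_pair {E : Type*} [Field E] [NumberField E] {p q : ℕ}
    (hp : p.Prime) (hq : q.Prime) (hp4 : p % 4 = 1) (hq4 : q % 4 = 3) (h2p : jacobiSym 2 p = -1)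
    (h2q : jacobiSym 2 q = 1) (hpq : jacobiSym p q = -1) {r s : E} (hr : r ^ 2 = p)
    (hs : s ^ 2 = q) (htop : ℚ⟮s, r⟯ = ⊤) : Odd (classNumber E) := by
  have hk : ∀ inst : Algebra ℚ ℚ⟮s⟯, ℚ⟮AdjoinSimple.gen ℚ s⟯ = ⊤ := by
    intro inst
    obtain rfl := Subsingleton.elim ℚ⟮s⟯.algebra' inst
    exact adjoin_simple_gen_eq_top s
  refine odd_classNumber_of_biquadratic (k := ℚ⟮s⟯) hp hq hp4 hq4 h2p h2q hpq
    (s := AdjoinSimple.gen ℚ s) (r := r) (Subtype.ext (by simpa using hs)) hr (hk _) ?_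
  refine eq_top_iff.2 fun x _ ↦ ?_
  have hx := adjoin_simple_adjoin_simple ℚ s r
  rw [htop, eq_top_iff] at hx
  exact hx mem_top

theorem statement5 (p q : ℕ) (h : Cond1 p q) [NumberField ↥(Kf p q)] :
    Odd (classNumber ↥(Kf p q)) := by
  obtain ⟨hp, hq, hp4, hq4, h2p, h2q, hpq⟩ := h
  let r : Kf p q := ⟨√p, subset_adjoin ℚ _ (by simp)⟩
  let s : Kf p q := ⟨√q, subset_adjoin ℚ _ (by simp)⟩
  have htop : ∀ inst : Algebra ℚ (Kf p q), adjoin ℚ {s, r} = ⊤ := by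
    intro inst
    obtain rfl := Subsingleton.elim (Kf p q).algebra' inst
    refine map_injective (Kf p q).val ?_
    rw [adjoin_map, ← AlgHom.fieldRange_eq_map, fieldRange_val, Set.image_pair, Set.pair_comm]
    rfl
  exact odd_classNumber_of_adjoin_sqrt_pair hp hq hp4 hq4 h2p h2q hpq (r := r) (s := s)
    (Subtype.ext (by simp [r])) (Subtype.ext (by simp [s])) (htop _)
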